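/- Fix positive integers r and s. For each positive integer t let X_t be the volume random variable on PP(r,s,t) equipped with the uniform probability distribution. Then for every real number x ≠ 0, the characteristic function of X_t/t converges as t → ∞: E[exp(i x X_t / t)] → ((e^{ix} − 1)/(ix))^{rs}. -/

import Mathlib

/-!
With `h = i + j + 1`, `i < r`, `j < s`, MacMahon's formula reads
`∑_p q ^ vol p = ∏_{i,j} (1 - q ^ (h + t)) / (1 - q ^ h)`. Taking `q = e^{ix/t}`, so that
`q ^ t = e^{ix}`, and dividing by the value at `q = 1` (the cardinality), each factor tends to
`(e^{ix} - 1) / (ix)` because `t (q - 1) → ix` (`factor_limit`).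

MacMahon's formula (`macmahon`) is proved through Gelfand–Tsetlin patterns. A pattern with top row
`(t, …, t, 0, …, 0)` (`r` entries `t`, `s` zeros) is forced to be constant outside an `r × s`
rectangle, and on that rectangle it is a plane partition in the box (`gtSum_rect`). The generating
function of patterns by the sum of their entries is, up to a constant, a Vandermonde determinant
in `q ^ (l i + n - 1 - i)` (`gtSum_formula`). This follows by induction on the length of the top
row: the rows interlacing with `l` form a box, so by multilinearity of the determinant the
summation is carried out row by row, and the resulting geometric sums are differences of
consecutive rows of the next Vandermonde matrix. This argument needs `q` nonzero and not a root of
unity; both sides being polynomials in `q`, the formula extends to all complex `q`.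
-/

open Finset Filter

/-- Plane partitions fitting inside an `(r,s,t)`-box. -/
def PP (r s t : ℕ) : Finset (Fin r → Fin s → Fin (t + 1)) :=
  Finset.univ.filter fun p =>
    ∀ i i' : Fin r, ∀ j j' : Fin s, i ≤ i' → j ≤ j' → (p i' j' : ℕ) ≤ (p i j : ℕ)

/-- The volume of a plane partition. -/
def vol {r s t : ℕ} (p : Fin r → Fin s → Fin (t + 1)) : ℕ :=
  ∑ i, ∑ j, (p i j : ℕ)

/-! ### The generating function of Gelfand–Tsetlin patterns -/

/-- The Gelfand–Tsetlin sum: `gtSum q n l` is the sum of `q ^ (sum of all entries)` over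
Gelfand–Tsetlin patterns with top row `l` (of length `n`), defined by summing over the
second row `m`, which interlaces with `l`. -/
def gtSum {K : Type*} [Field K] (q : K) : (n : ℕ) → (Fin n → ℕ) → K
  | 0, _ => 1
  | n + 1, l => q ^ (∑ i, l i) *
      ∑ m ∈ Fintype.piFinset (fun i : Fin n => Finset.Icc (l i.succ) (l i.castSucc)), gtSum q n m

/-- The normalising constant of the product formula for `gtSum`. -/
def gtConst {K : Type*} [Field K] (q : K) : ℕ → K
  | 0 => 1
  | n + 1 => gtConst q n * (∏ i : Fin n, q ^ (n - 1 - (i : ℕ))) *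
      ∏ j : Fin n, (1 - q ^ ((j : ℕ) + 1))

lemma geom_Icc {K : Type*} [Field K] (y : K) (a b d : ℕ) (h : a ≤ b) :
    (1 - y) * ∑ m ∈ Finset.Icc a b, y ^ (m + d) = y ^ (a + d) - y ^ (b + 1 + d) := by
  induction b, h using Nat.le_induction with
  | base => simp; ring
  | succ b hb ih =>
    rw [Finset.sum_Icc_succ_top (by omega), mul_add, ih]
    ring

/-- Subtracting consecutive rows reduces a Vandermonde determinant by one size. -/
lemma vandermonde_diff {K : Type*} [Field K] {n : ℕ} (v : Fin (n + 1) → K) :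
    (Matrix.vandermonde v).det =
      (Matrix.of fun i j : Fin n =>
        v i.succ ^ ((j : ℕ) + 1) - v i.castSucc ^ ((j : ℕ) + 1)).det := by
  let B : Matrix (Fin (n + 1)) (Fin (n + 1)) K := Matrix.of fun i j =>
    Fin.cases (v 0 ^ (j : ℕ)) (fun i' => v i'.succ ^ (j : ℕ) - v i'.castSucc ^ (j : ℕ)) i
  rw [Matrix.det_eq_of_forall_row_eq_smul_add_pred (B := B) (fun _ => 1)]
  · rw [Matrix.det_succ_column_zero, Fin.sum_univ_succ]
    simp [B]
    congr 1
  · intro j; simp [B, Matrix.vandermonde_apply]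
  · intro i j; simp [B, Matrix.vandermonde_apply]

/-- Product formula: up to a constant, `gtSum` is a Vandermonde determinant in the
`q ^ (l i + n - 1 - i)`. The sum over an interlacing row is a sum over a box, so
multilinearity of the determinant turns it into geometric sums in each row. -/
lemma gtSum_formula {K : Type*} [Field K] (q : K) (n : ℕ) (l : Fin n → ℕ) (hl : Antitone l) :
    gtConst q n * gtSum q n l = q ^ (∑ i, l i) *
      (Matrix.vandermonde fun i : Fin n => q ^ (l i + (n - 1 - (i : ℕ)))).det := by
  induction n with
  | zero => simp [gtConst, gtSum]
  | succ n ih =>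
    have key : ∀ m ∈ Fintype.piFinset (fun i : Fin n => Finset.Icc (l i.succ) (l i.castSucc)),
        (∏ i : Fin n, q ^ (n - 1 - (i : ℕ))) * (gtConst q n * gtSum q n m) =
        (Matrix.of fun i j : Fin n => (q ^ ((j : ℕ) + 1)) ^ (m i + (n - 1 - (i : ℕ)))).det := by
      intro m hm
      simp only [Fintype.mem_piFinset, Finset.mem_Icc] at hm
      rw [ih m]
      · rw [← mul_assoc, ← Finset.prod_pow_eq_pow_sum, ← Finset.prod_mul_distrib,
          ← Matrix.det_mul_column]
        congr 1
        ext i j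
        simp only [Matrix.of_apply, Matrix.vandermonde_apply]
        ring
      · intro i j hij
        rcases hij.eq_or_lt with rfl | h
        · exact le_rfl
        · refine (hm j).2.trans (le_trans (hl ?_) (hm i).1)
          rw [Fin.le_def]; simpa using h
    have h1 : gtConst q (n + 1) * gtSum q (n + 1) l = q ^ (∑ i, l i) *
        ((∏ j : Fin n, (1 - q ^ ((j : ℕ) + 1))) * ∑ m ∈ Fintype.piFinset
          (fun i : Fin n => Finset.Icc (l i.succ) (l i.castSucc)),
          (Matrix.of fun i j : Fin n =>
            (q ^ ((j : ℕ) + 1)) ^ (m i + (n - 1 - (i : ℕ)))).det) := by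
      rw [← Finset.sum_congr rfl key, ← Finset.mul_sum, ← Finset.mul_sum, gtConst, gtSum]
      ring
    have h2 : ∑ m ∈ Fintype.piFinset (fun i : Fin n => Finset.Icc (l i.succ) (l i.castSucc)),
        (Matrix.of fun i j : Fin n => (q ^ ((j : ℕ) + 1)) ^ (m i + (n - 1 - (i : ℕ)))).det =
        (Matrix.of fun i j : Fin n => ∑ m ∈ Finset.Icc (l i.succ) (l i.castSucc),
          (q ^ ((j : ℕ) + 1)) ^ (m + (n - 1 - (i : ℕ)))).det := by
      have := (Matrix.detRowAlternating (n := Fin n) (R := K)).toMultilinearMap.map_sum_finset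
        (fun (i : Fin n) (m : ℕ) (j : Fin n) => (q ^ ((j : ℕ) + 1)) ^ (m + (n - 1 - (i : ℕ))))
        (fun i : Fin n => Finset.Icc (l i.succ) (l i.castSucc))
      refine this.symm.trans ?_
      change Matrix.det _ = _
      congr 1
      ext i j
      simp
    rw [h1, h2, ← Matrix.det_mul_row, vandermonde_diff]
    congr 2
    ext i j
    have hi := i.2
    simp only [Matrix.of_apply]
    rw [geom_Icc _ _ _ _ (hl (Fin.castSucc_le_succ i))]
    have e1 : n + 1 - 1 - ((i.succ : Fin (n + 1)) : ℕ) = n - 1 - i := by simp; omega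
    have e2 : n + 1 - 1 - ((i.castSucc : Fin (n + 1)) : ℕ) = 1 + (n - 1 - i) := by simp; omega
    rw [e1, e2]
    ring

/-! ### Patterns as arrays -/

/-- `IsGT n l A`: the array `A`, supported on `i + j < n`, is a Gelfand–Tsetlin pattern with
top row `l`. The antidiagonal `i + j = k - 1` is the row of length `k`, read with increasing
`i`, so that interlacing says that `A` decreases in `i` and increases in `j`. -/
def IsGT (n : ℕ) (l : Fin n → ℕ) (A : ℕ → ℕ → ℕ) : Prop :=
  (∀ i j, n ≤ i + j → A i j = 0) ∧ (∀ (i : Fin n) (j : ℕ), (i : ℕ) + j + 1 = n → A i j = l i) ∧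
    ∀ i j, i + j + 1 < n → A (i + 1) j ≤ A i j ∧ A i j ≤ A i (j + 1)

/-- The sum of all entries of a pattern, antidiagonal by antidiagonal. -/
def gtWeight (n : ℕ) (A : ℕ → ℕ → ℕ) : ℕ :=
  ∑ m ∈ Finset.range n, ∑ i ∈ Finset.range (m + 1), A i (m - i)

/-- Adds the antidiagonal `l` to a pattern of size `n`. -/
def gtExtend (n : ℕ) (l : Fin (n + 1) → ℕ) (A : ℕ → ℕ → ℕ) (i j : ℕ) : ℕ :=
  if h : i + j = n then l ⟨i, by omega⟩ else A i j

lemma gtWeight_extend (n : ℕ) (l : Fin (n + 1) → ℕ) (A : ℕ → ℕ → ℕ) :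
    gtWeight (n + 1) (gtExtend n l A) = (∑ i, l i) + gtWeight n A := by
  rw [gtWeight, Finset.sum_range_succ, add_comm, gtWeight]
  congr 1
  · rw [Finset.sum_range]
    refine Finset.sum_congr rfl fun i _ => ?_
    have := i.2
    rw [gtExtend, dif_pos (by omega)]
  · refine Finset.sum_congr rfl fun m hm => Finset.sum_congr rfl fun i hi => ?_
    simp only [Finset.mem_range] at hm hi
    rw [gtExtend, dif_neg (by omega)]

/-- The recursively defined `gtSum` is the generating function of Gelfand–Tsetlin patterns. -/
lemma gtSum_eq {K : Type*} [Field K] (q : K) (n : ℕ) (l : Fin n → ℕ) :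
    ∃ G : Finset (ℕ → ℕ → ℕ), (∀ A, A ∈ G ↔ IsGT n l A) ∧
      gtSum q n l = ∑ A ∈ G, q ^ gtWeight n A := by
  classical
  induction n with
  | zero =>
    refine ⟨{0}, fun A => ?_, by simp [gtSum, gtWeight]⟩
    rw [Finset.mem_singleton]
    constructor
    · rintro rfl
      exact ⟨fun _ _ _ => rfl, fun i => i.elim0, fun i j h => by omega⟩
    · intro h
      funext i j
      exact h.1 i j (by omega)
  | succ n ih =>
    choose G hG hS using ih
    let box := Fintype.piFinset (fun i : Fin n => Finset.Icc (l i.succ) (l i.castSucc))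
    have hinj : Set.InjOn (fun x : (_ : Fin n → ℕ) × (ℕ → ℕ → ℕ) => gtExtend n l x.2)
        (box.sigma G : Finset ((_ : Fin n → ℕ) × (ℕ → ℕ → ℕ))) := by
      rintro ⟨m, A⟩ h ⟨m', A'⟩ h' heq
      simp only [Finset.coe_sigma, Set.mem_sigma_iff, Finset.mem_coe, hG] at h h' heq
      have hA : A = A' := by
        funext i j
        have := congrFun (congrFun heq i) j
        unfold gtExtend at this
        by_cases hij : i + j = n
        · rw [h.2.1 i j hij.ge, h'.2.1 i j hij.ge]
        · simpa [hij] using this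
      have hm : m = m' := by
        funext i
        have := i.2
        rw [← h.2.2.1 i (n - 1 - i) (by omega), ← h'.2.2.1 i (n - 1 - i) (by omega), hA]
      rw [hA, hm]
    refine ⟨(box.sigma G).image fun x => gtExtend n l x.2, fun A => ?_, ?_⟩
    · simp only [Finset.mem_image, Finset.mem_sigma, Sigma.exists, hG, box,
        Fintype.mem_piFinset, Finset.mem_Icc]
      constructor
      · rintro ⟨m, B, ⟨hm, hB0, hB1, hB2⟩, rfl⟩
        refine ⟨fun i j h => ?_, fun i j h => ?_, fun i j h => ?_⟩
        · rw [gtExtend, dif_neg (by omega)]; exact hB0 i j (by omega)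
        · rw [gtExtend, dif_pos (by omega)]
        · by_cases hij : i + j + 1 = n
          · have e1 : gtExtend n l B i j = m ⟨i, by omega⟩ := by
              rw [gtExtend, dif_neg (by omega)]; exact hB1 ⟨i, by omega⟩ j hij
            have e2 : gtExtend n l B (i + 1) j = l (Fin.succ ⟨i, by omega⟩) := by
              rw [gtExtend, dif_pos (by omega)]; rfl
            have e3 : gtExtend n l B i (j + 1) = l (Fin.castSucc ⟨i, by omega⟩) := by
              rw [gtExtend, dif_pos (by omega)]; rfl
            rw [e1, e2, e3]
            exact hm ⟨i, by omega⟩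
          · simp only [gtExtend]
            rw [dif_neg (by omega), dif_neg (by omega), dif_neg (by omega)]
            exact hB2 i j (by omega)
      · rintro ⟨h0, h1, h2⟩
        refine ⟨fun i => A i (n - 1 - i), fun i j => if i + j < n then A i j else 0,
          ⟨fun i => ?_, fun i j h => ?_, fun i j h => ?_, fun i j h => ?_⟩, ?_⟩
        · have hi := i.2
          have a := h2 i (n - 1 - i) (by omega)
          have b := h1 i.succ (n - 1 - i) (by simp; omega)
          have c := h1 i.castSucc (n - 1 - i + 1) (by simp; omega)
          rw [← b, ← c]
          simpa using a
        · simp; omega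
        · have : n - 1 - (i : ℕ) = j := by omega
          simp only [this]
          rw [if_pos (by omega)]
        · simp only
          rw [if_pos (by omega), if_pos (by omega), if_pos (by omega)]
          exact h2 i j (by omega)
        · funext i j
          simp only [gtExtend]
          split_ifs with h
          · exact (h1 ⟨i, by omega⟩ j (by simp; omega)).symm
          · rfl
          · exact (h0 i j (by omega)).symm
    · rw [Finset.sum_image hinj, Finset.sum_sigma, gtSum, Finset.mul_sum]
      refine Finset.sum_congr rfl fun m _ => ?_
      rw [hS, Finset.mul_sum]
      refine Finset.sum_congr rfl fun A _ => ?_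
      rw [gtWeight_extend, pow_add]

/-! ### Plane partitions as patterns -/

/-- The top row `(t, …, t, 0, …, 0)` with `r` entries `t` and `s` zeros. -/
def rectRow (r s t : ℕ) (i : Fin (r + s)) : ℕ := if (i : ℕ) < r then t else 0

lemma rectRow_antitone (r s t : ℕ) : Antitone (rectRow r s t) := by
  intro i j h
  have : (i : ℕ) ≤ j := h
  unfold rectRow
  split_ifs <;> omega

lemma IsGT.row_mono {n : ℕ} {l : Fin n → ℕ} {A : ℕ → ℕ → ℕ} (h : IsGT n l A) (i j k : ℕ)
    (hk : i + j + k < n) : A i j ≤ A i (j + k) := by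
  induction k with
  | zero => exact le_rfl
  | succ k ih => exact (ih (by omega)).trans (h.2.2 i (j + k) (by omega)).2

lemma IsGT.col_anti {n : ℕ} {l : Fin n → ℕ} {A : ℕ → ℕ → ℕ} (h : IsGT n l A) (i j k : ℕ)
    (hk : i + j + k < n) : A (i + k) j ≤ A i j := by
  induction k with
  | zero => exact le_rfl
  | succ k ih => exact (h.2.2 (i + k) j (by omega)).1.trans (ih (by omega))

lemma IsGT.le_top {r s t : ℕ} {A : ℕ → ℕ → ℕ} (h : IsGT (r + s) (rectRow r s t) A) (i j : ℕ)
    (hij : i + j < r + s) : A i j ≤ if i < r then t else 0 := by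
  have h1 := h.row_mono i j (r + s - 1 - i - j) (by omega)
  rw [h.2.1 ⟨i, by omega⟩ (j + (r + s - 1 - i - j)) (by simp; omega)] at h1
  exact h1

/-- The part of the pattern below the block of `t`s in the top row is forced to be `t`. -/
lemma IsGT.eq_top {r s t : ℕ} {A : ℕ → ℕ → ℕ} (h : IsGT (r + s) (rectRow r s t) A) (i j : ℕ)
    (hij : i + j < r + s) (hj : s ≤ j) : A i j = t := by
  have h1 := h.col_anti i j (r + s - 1 - i - j) (by omega)
  have h3 := h.2.1 ⟨i + (r + s - 1 - i - j), by omega⟩ j (by simp; omega)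
  simp only at h3
  rw [h3, rectRow, if_pos (by simp; omega)] at h1
  have h2 := h.le_top i j hij
  rw [if_pos (by omega)] at h2
  exact le_antisymm h2 h1

/-- The Gelfand–Tsetlin pattern of a plane partition: reflect the second coordinate and add the
forced triangles of `t`s and zeros. -/
def ofPP (r s t : ℕ) (p : Fin r → Fin s → Fin (t + 1)) (i j : ℕ) : ℕ :=
  if h : i < r ∧ j < s then (p ⟨i, h.1⟩ ⟨s - 1 - j, by omega⟩ : ℕ)
  else if i < r ∧ i + j < r + s then t else 0

lemma gtWeight_ofPP (r s t : ℕ) (p : Fin r → Fin s → Fin (t + 1)) :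
    gtWeight (r + s) (ofPP r s t p) = vol p + ∑ i : Fin r, t * (r - i) := by
  rw [gtWeight, Finset.sum_range_diag_flip, Finset.sum_range_add]
  have hz : ∑ x ∈ Finset.range s, ∑ k ∈ Finset.range (r + s - (r + x)),
      ofPP r s t p (r + x) k = 0 := by
    refine Finset.sum_eq_zero fun x _ => Finset.sum_eq_zero fun k _ => ?_
    rw [ofPP, dif_neg (by omega), if_neg (by omega)]
  rw [hz, add_zero, vol, ← Finset.sum_add_distrib, Finset.sum_range]
  refine Finset.sum_congr rfl fun i _ => ?_
  have hi := i.2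
  have e : r + s - (i : ℕ) = s + (r - i) := by omega
  rw [e, Finset.sum_range_add]
  congr 1
  · rw [Finset.sum_range, ← Equiv.sum_comp Fin.revPerm]
    refine Finset.sum_congr rfl fun j _ => ?_
    have hj := j.2
    rw [ofPP, dif_pos ⟨hi, by simp; omega⟩]
    congr 2
    ext
    simp
    omega
  · rw [Finset.sum_congr rfl (g := fun _ => t)]
    · simp [mul_comm]
    · intro k hk
      rw [Finset.mem_range] at hk
      rw [ofPP, dif_neg (by omega), if_pos (by omega)]

/-- Patterns with top row `rectRow r s t` correspond to plane partitions in the box; the extra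
product is the contribution of the forced triangle of `t`s. -/
lemma gtSum_rect {K : Type*} [Field K] (q : K) (r s t : ℕ) :
    gtSum q (r + s) (rectRow r s t) =
      (∑ p ∈ PP r s t, q ^ vol p) * ∏ i : Fin r, q ^ (t * (r - i)) := by
  obtain ⟨G, hG, hS⟩ := gtSum_eq q (r + s) (rectRow r s t)
  rw [hS, Finset.sum_mul]
  symm
  -- `Fin.ofNat` reduces modulo `t + 1`, which is harmless as the entries are at most `t`.
  refine Finset.sum_bij' (fun p _ => ofPP r s t p)
    (fun A _ i j => Fin.ofNat (t + 1) (A i (s - 1 - j))) ?_ ?_ ?_ ?_ ?_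
  · intro p hp
    simp only [PP, Finset.mem_filter, Finset.mem_univ, true_and] at hp
    rw [hG]
    refine ⟨fun i j h => ?_, fun i j h => ?_, fun i j h => ⟨?_, ?_⟩⟩
    · rw [ofPP, dif_neg (by omega), if_neg (by omega)]
    · have := i.2
      rw [rectRow, ofPP, dif_neg (by omega)]
      split_ifs <;> omega
    · unfold ofPP
      split_ifs with h1 h2 h3 h4 h5 <;> try omega
      exact hp _ _ _ _ (by simp) (by simp)
    · unfold ofPP
      split_ifs with h1 h2 h3 h4 h5 <;> try omega
      exact hp _ _ _ _ (by simp) (by simp; omega)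
  · intro A hA
    rw [hG] at hA
    simp only [PP, Finset.mem_filter, Finset.mem_univ, true_and]
    intro i i' j j' hi hj
    have hi' : (i : ℕ) ≤ i' := hi
    have hj' : (j : ℕ) ≤ j' := hj
    have h1 := i.2
    have h1' := i'.2
    have h2 := j.2
    have h2' := j'.2
    have b1 := hA.le_top i (s - 1 - j) (by omega)
    have b2 := hA.le_top i' (s - 1 - j') (by omega)
    rw [if_pos h1] at b1
    rw [if_pos h1'] at b2
    simp only [Fin.ofNat, Nat.mod_eq_of_lt (Nat.lt_succ_of_le b1),
      Nat.mod_eq_of_lt (Nat.lt_succ_of_le b2)]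
    have c1 := hA.col_anti i (s - 1 - j') (i' - i) (by omega)
    have c2 := hA.row_mono i (s - 1 - j') (j' - j) (by omega)
    have e1 : (i : ℕ) + (i' - i) = i' := by omega
    have e2 : s - 1 - (j' : ℕ) + (j' - j) = s - 1 - j := by omega
    rw [e1] at c1
    rw [e2] at c2
    exact c1.trans c2
  · intro p hp
    funext i j
    have hj := j.2
    have e : s - 1 - (s - 1 - (j : ℕ)) = j := by omega
    ext
    rw [ofPP, dif_pos ⟨i.2, by omega⟩]
    simp [Fin.ofNat, e]
    exact Nat.lt_succ_iff.mp (p i j).2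
  · intro A hA
    rw [hG] at hA
    funext i j
    unfold ofPP
    split_ifs with h1 h2
    · have b := hA.le_top i j (by omega)
      rw [if_pos h1.1] at b
      have e : s - 1 - (s - 1 - j) = j := by omega
      simp only [Fin.ofNat, e, Nat.mod_eq_of_lt (Nat.lt_succ_of_le b)]
    · exact (hA.eq_top i j h2.2 (by omega)).symm
    · by_cases hij : i + j < r + s
      · have b := hA.le_top i j hij
        rw [if_neg (by omega)] at b
        omega
      · exact (hA.1 i j (by omega)).symm
  · intro p hp
    rw [gtWeight_ofPP, pow_add, Finset.prod_pow_eq_pow_sum]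

/-! ### MacMahon's box formula -/

lemma gtSum_zero {K : Type*} [Field K] (q : K) (n : ℕ) (l : Fin n → ℕ) (hl : ∀ i, l i = 0) :
    gtSum q n l = 1 := by
  obtain rfl : l = fun _ => 0 := funext hl
  clear hl
  induction n with
  | zero => rfl
  | succ n ih =>
    have : Fintype.piFinset (fun _ : Fin n => ({0} : Finset ℕ)) = {fun _ => 0} :=
      Fintype.piFinset_singleton _
    simp [gtSum, this, ih]

lemma gtConst_ne_zero {K : Type*} [Field K] (q : K) (h0 : q ≠ 0)
    (h1 : ∀ k : ℕ, 0 < k → q ^ k ≠ 1) (n : ℕ) : gtConst q n ≠ 0 := by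
  induction n with
  | zero => exact one_ne_zero
  | succ n ih =>
    refine mul_ne_zero (mul_ne_zero ih ?_) ?_
    · exact Finset.prod_ne_zero_iff.2 fun i _ => pow_ne_zero _ h0
    · exact Finset.prod_ne_zero_iff.2 fun i _ => sub_ne_zero.2 (h1 _ (by omega)).symm

lemma prod_pairs_split {K : Type*} [Field K] (r s : ℕ) (f : Fin (r + s) → Fin (r + s) → K) :
    ∏ i, ∏ j ∈ Finset.Ioi i, f i j =
      (∏ i : Fin r, ∏ j ∈ Finset.Ioi i, f (Fin.castAdd s i) (Fin.castAdd s j)) *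
      (∏ i : Fin s, ∏ j ∈ Finset.Ioi i, f (Fin.natAdd r i) (Fin.natAdd r j)) *
      ∏ i : Fin r, ∏ j : Fin s, f (Fin.castAdd s i) (Fin.natAdd r j) := by
  have key : ∀ (n : ℕ) (g : Fin n → Fin n → K),
      ∏ i, ∏ j ∈ Finset.Ioi i, g i j = ∏ i, ∏ j, if i < j then g i j else 1 := by
    intro n g
    refine Finset.prod_congr rfl fun i _ => ?_
    rw [← Finset.prod_filter]
    congr 1
    ext j
    simp
  rw [key, key, key, Fin.prod_univ_add]
  simp only [Fin.prod_univ_add, Finset.prod_mul_distrib]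
  have e1 : ∀ (i : Fin r) (j : Fin s), Fin.castAdd s i < Fin.natAdd r j := by
    intro i j; rw [Fin.lt_def]; simp; omega
  have e2 : ∀ (i : Fin r) (j : Fin s), ¬ Fin.natAdd r j < Fin.castAdd s i := by
    intro i j; exact (e1 i j).not_gt
  have e3 : ∀ (i j : Fin r), Fin.castAdd s i < Fin.castAdd s j ↔ i < j := by
    intro i j; simp only [Fin.lt_def, Fin.val_castAdd]
  have e4 : ∀ (i j : Fin s), Fin.natAdd r i < Fin.natAdd r j ↔ i < j := by
    intro i j; simp only [Fin.lt_def, Fin.val_natAdd]; omega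
  simp only [e1, e2, e3, e4, if_true, if_false, Finset.prod_const_one, one_mul]
  ring

/-- The Vandermonde determinant belonging to `rectRow r s t`. Pairs of indices inside the block of
`t`s contribute `q ^ t` times a factor independent of `t`, pairs inside the block of zeros do not
involve `t`, and the mixed pairs give the factors `1 - q ^ (i + j + 1 + t)`. -/
lemma vandermonde_rect {K : Type*} [Field K] (q : K) (r s : ℕ) :
    ∃ D : K, ∀ t : ℕ,
      (Matrix.vandermonde fun i : Fin (r + s) =>
        q ^ (rectRow r s t i + (r + s - 1 - (i : ℕ)))).det =
      D * (∏ i : Fin r, q ^ (t * (r - 1 - i))) *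
        ∏ i : Fin r, ∏ j : Fin s, (1 - q ^ ((i : ℕ) + j + 1 + t)) := by
  refine ⟨(∏ i : Fin r, ∏ j ∈ Finset.Ioi i,
      (q ^ (r + s - 1 - (j : ℕ)) - q ^ (r + s - 1 - (i : ℕ)))) *
    (∏ i : Fin s, ∏ j ∈ Finset.Ioi i, (q ^ (s - 1 - (j : ℕ)) - q ^ (s - 1 - (i : ℕ)))) *
    ∏ i : Fin r, ∏ j : Fin s, q ^ (s - 1 - (j : ℕ)), fun t => ?_⟩
  rw [Matrix.det_vandermonde, prod_pairs_split]
  have b1 : ∏ i : Fin r, ∏ j ∈ Finset.Ioi i,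
      (q ^ (rectRow r s t (Fin.castAdd s j) + (r + s - 1 - (Fin.castAdd s j : ℕ))) -
        q ^ (rectRow r s t (Fin.castAdd s i) + (r + s - 1 - (Fin.castAdd s i : ℕ)))) =
      (∏ i : Fin r, q ^ (t * (r - 1 - i))) * (∏ i : Fin r, ∏ j ∈ Finset.Ioi i,
      (q ^ (r + s - 1 - (j : ℕ)) - q ^ (r + s - 1 - (i : ℕ)))) := by
    rw [← Finset.prod_mul_distrib]
    refine Finset.prod_congr rfl fun i _ => ?_
    rw [pow_mul, ← Fin.card_Ioi i, ← Finset.prod_const, ← Finset.prod_mul_distrib]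
    refine Finset.prod_congr rfl fun j _ => ?_
    simp [rectRow, pow_add]
    ring
  have b2 : ∏ i : Fin s, ∏ j ∈ Finset.Ioi i,
      (q ^ (rectRow r s t (Fin.natAdd r j) + (r + s - 1 - (Fin.natAdd r j : ℕ))) -
        q ^ (rectRow r s t (Fin.natAdd r i) + (r + s - 1 - (Fin.natAdd r i : ℕ)))) =
      ∏ i : Fin s, ∏ j ∈ Finset.Ioi i, (q ^ (s - 1 - (j : ℕ)) - q ^ (s - 1 - (i : ℕ))) := by
    refine Finset.prod_congr rfl fun i _ => Finset.prod_congr rfl fun j _ => ?_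
    have e : ∀ k : Fin s, r + s - 1 - (r + (k : ℕ)) = s - 1 - k := by intro k; omega
    simp [rectRow, e]
  have b3 : ∏ i : Fin r, ∏ j : Fin s,
      (q ^ (rectRow r s t (Fin.natAdd r j) + (r + s - 1 - (Fin.natAdd r j : ℕ))) -
        q ^ (rectRow r s t (Fin.castAdd s i) + (r + s - 1 - (Fin.castAdd s i : ℕ)))) =
      (∏ i : Fin r, ∏ j : Fin s, q ^ (s - 1 - (j : ℕ))) *
        ∏ i : Fin r, ∏ j : Fin s, (1 - q ^ ((i : ℕ) + j + 1 + t)) := by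
    rw [← Equiv.prod_comp Fin.revPerm
      (fun i : Fin r => ∏ j : Fin s, (1 - q ^ ((i : ℕ) + j + 1 + t))),
      ← Finset.prod_mul_distrib]
    refine Finset.prod_congr rfl fun i _ => ?_
    rw [← Finset.prod_mul_distrib]
    refine Finset.prod_congr rfl fun j _ => ?_
    have e : r + s - 1 - (r + (j : ℕ)) = s - 1 - j := by omega
    have e' : t + (r + s - 1 - (i : ℕ)) = (s - 1 - j) + ((r - (i + 1)) + j + 1 + t) := by omega
    simp only [rectRow, Fin.val_natAdd, Fin.val_castAdd, i.2, if_true, e, e', Fin.revPerm_apply,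
      Fin.val_rev]
    rw [if_neg (by omega), mul_sub, ← pow_add]
    simp
  rw [b1, b2, b3]
  ring

/-- MacMahon's formula away from the roots of unity. -/
lemma macmahon_field {K : Type*} [Field K] (q : K) (h0 : q ≠ 0)
    (h1 : ∀ k : ℕ, 0 < k → q ^ k ≠ 1) (r s t : ℕ) :
    (∑ p ∈ PP r s t, q ^ vol p) * ∏ i : Fin r, ∏ j : Fin s, (1 - q ^ ((i : ℕ) + j + 1)) =
      ∏ i : Fin r, ∏ j : Fin s, (1 - q ^ ((i : ℕ) + j + 1 + t)) := by
  obtain ⟨D, hD⟩ := vandermonde_rect q r s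
  -- The top row `0` has a single pattern, which evaluates the normalising constant.
  have hz := gtSum_formula q (r + s) (rectRow r s 0) (rectRow_antitone r s 0)
  rw [gtSum_zero q (r + s) (rectRow r s 0) (by intro i; simp [rectRow]), hD 0] at hz
  have hz' : gtConst q (r + s) = D * ∏ i : Fin r, ∏ j : Fin s, (1 - q ^ ((i : ℕ) + j + 1)) := by
    simpa [rectRow] using hz
  have hC := gtConst_ne_zero q h0 h1 (r + s)
  have ht := gtSum_formula q (r + s) (rectRow r s t) (rectRow_antitone r s t)
  rw [hD t, gtSum_rect] at ht
  have hpow : q ^ (∑ i, rectRow r s t i) * ∏ i : Fin r, q ^ (t * (r - 1 - i)) =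
      ∏ i : Fin r, q ^ (t * (r - i)) := by
    have : ∑ i, rectRow r s t i = ∑ i : Fin r, t := by
      rw [Fin.sum_univ_add]
      simp [rectRow]
    rw [this, ← Finset.prod_pow_eq_pow_sum, ← Finset.prod_mul_distrib]
    refine Finset.prod_congr rfl fun i _ => ?_
    have e : r - (i : ℕ) = 1 + (r - 1 - i) := by omega
    rw [e, mul_add, pow_add, mul_one]
  have hQ : ∏ i : Fin r, q ^ (t * (r - i)) ≠ 0 :=
    Finset.prod_ne_zero_iff.2 fun i _ => pow_ne_zero _ h0
  rw [hz'] at hC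
  have hD0 : D ≠ 0 := left_ne_zero_of_mul hC
  apply mul_left_cancel₀ (mul_ne_zero hD0 hQ)
  rw [hz', ← mul_assoc] at ht
  calc _ = _ := by ring
    _ = _ := ht
    _ = _ := by rw [← hpow]; ring

/-- MacMahon's formula as an identity of polynomials in `q`, hence valid at every complex `q`. -/
lemma macmahon (q : ℂ) (r s t : ℕ) :
    (∑ p ∈ PP r s t, q ^ vol p) *
        ∏ i : Fin r, ∏ j : Fin s, ∑ k ∈ Finset.range ((i : ℕ) + j + 1), q ^ k =
      ∏ i : Fin r, ∏ j : Fin s, ∑ k ∈ Finset.range ((i : ℕ) + j + 1 + t), q ^ k := by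
  have hpoly : (∑ p ∈ PP r s t, (Polynomial.X : Polynomial ℂ) ^ vol p) *
        ∏ i : Fin r, ∏ j : Fin s, ∑ k ∈ Finset.range ((i : ℕ) + j + 1), Polynomial.X ^ k =
      ∏ i : Fin r, ∏ j : Fin s, ∑ k ∈ Finset.range ((i : ℕ) + j + 1 + t), Polynomial.X ^ k := by
    apply Polynomial.eq_of_infinite_eval_eq
    -- The integers `2, 3, …` are nonzero and not roots of unity.
    have hinf : (Set.range fun k : ℕ => ((k + 2 : ℕ) : ℂ)).Infinite :=
      Set.infinite_range_of_injective fun a b h => by simpa using h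
    refine hinf.mono ?_
    rintro _ ⟨k, rfl⟩
    have hk := macmahon_field ((k + 2 : ℕ) : ℂ) (by norm_cast) (fun m hm h => by
      have h' : (k + 2) ^ m = 1 := by exact_mod_cast h
      have := Nat.one_lt_pow hm.ne' (show 1 < k + 2 by omega)
      omega) r s t
    simp only [Set.mem_ofPred_eq, Polynomial.eval_mul, Polynomial.eval_finsetSum,
      Polynomial.eval_prod, Polynomial.eval_pow, Polynomial.eval_X]
    generalize hx : ((k + 2 : ℕ) : ℂ) = x at hk ⊢
    have hx1 : (1 - x) ≠ 0 := by
      rw [← hx, sub_ne_zero]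
      intro h
      have : 1 = k + 2 := by exact_mod_cast h
      omega
    simp only [← mul_neg_geom_sum, Finset.prod_mul_distrib] at hk
    apply mul_left_cancel₀ (Finset.prod_ne_zero_iff.2 fun (i : Fin r) _ =>
      Finset.prod_ne_zero_iff.2 fun (j : Fin s) _ => hx1)
    rw [← hk]
    ring
  have := congrArg (Polynomial.eval q) hpoly
  simpa only [Polynomial.eval_mul, Polynomial.eval_finsetSum,
      Polynomial.eval_prod, Polynomial.eval_pow, Polynomial.eval_X] using this

/-! ### Asymptotics -/

lemma tendsto_exp_div (z : ℂ) :
    Tendsto (fun t : ℕ => Complex.exp (z / t)) atTop (nhds 1) := by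
  have h1 : Tendsto (fun t : ℕ => z / (t : ℂ)) atTop (nhds 0) := by
    simpa [div_eq_mul_inv] using (tendsto_inv_atTop_nhds_zero_nat (𝕜 := ℂ)).const_mul z
  have h2 := (Complex.continuous_exp.tendsto 0).comp h1
  rw [Complex.exp_zero] at h2
  exact h2

lemma tendsto_mul_exp_sub_one (z : ℂ) :
    Tendsto (fun t : ℕ => (t : ℂ) * (Complex.exp (z / t) - 1)) atTop (nhds z) := by
  have hd : HasDerivAt (fun y : ℂ => Complex.exp (z * y)) z 0 := by
    have := ((hasDerivAt_id (0 : ℂ)).const_mul z).cexp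
    simpa using this
  rw [hasDerivAt_iff_tendsto_slope_zero] at hd
  have h : Tendsto (fun t : ℕ => ((t : ℂ))⁻¹) atTop (nhdsWithin 0 {0}ᶜ) := by
    refine tendsto_nhdsWithin_iff.2 ⟨tendsto_inv_atTop_nhds_zero_nat, ?_⟩
    filter_upwards [eventually_gt_atTop 0] with t ht
    simp [ht.ne']
  refine (hd.comp h).congr fun t => ?_
  simp [div_eq_mul_inv]

/-- The limit of one factor of MacMahon's product; here `q = e^{ix/t}`, so `q ^ t = e^{ix}`. -/
lemma factor_limit (x : ℝ) (hx : x ≠ 0) (h : ℕ) (hh : 0 < h) :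
    Tendsto (fun t : ℕ =>
      ((∑ k ∈ Finset.range (h + t), Complex.exp (Complex.I * x / t) ^ k) / ((h + t : ℕ) : ℂ)) /
      ((∑ k ∈ Finset.range h, Complex.exp (Complex.I * x / t) ^ k) / (h : ℂ))) atTop
      (nhds ((Complex.exp (Complex.I * x) - 1) / (Complex.I * x))) := by
  have hz : Complex.I * x ≠ 0 := mul_ne_zero Complex.I_ne_zero (by exact_mod_cast hx)
  set z : ℂ := Complex.I * x with hzdef
  have hh' : (h : ℂ) ≠ 0 := by exact_mod_cast hh.ne'
  have hmul := tendsto_mul_exp_sub_one z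
  have hq := tendsto_exp_div z
  have hden : Tendsto (fun t : ℕ => (∑ k ∈ Finset.range h, Complex.exp (z / t) ^ k) / (h : ℂ))
      atTop (nhds 1) := by
    have := (tendsto_finsetSum (Finset.range h) fun k _ => hq.pow k).div_const (h : ℂ)
    simpa [hh'] using this
  have hratio : Tendsto (fun t : ℕ => ((h + t : ℕ) : ℂ) / (t : ℂ)) atTop (nhds 1) := by
    have h1 : Tendsto (fun t : ℕ => (h : ℂ) * ((t : ℂ))⁻¹ + 1) atTop (nhds ((h : ℂ) * 0 + 1)) :=
      ((tendsto_inv_atTop_nhds_zero_nat (𝕜 := ℂ)).const_mul (h : ℂ)).add_const 1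
    rw [mul_zero, zero_add] at h1
    refine h1.congr' ?_
    filter_upwards [eventually_gt_atTop 0] with t ht
    have : (t : ℂ) ≠ 0 := by exact_mod_cast ht.ne'
    push_cast
    field_simp
  have hnum : Tendsto (fun t : ℕ =>
      (∑ k ∈ Finset.range (h + t), Complex.exp (z / t) ^ k) / ((h + t : ℕ) : ℂ)) atTop
      (nhds ((Complex.exp z - 1) / z)) := by
    have h1 : Tendsto (fun t : ℕ => (Complex.exp (z / t) ^ h * Complex.exp z - 1) /
        ((t : ℂ) * (Complex.exp (z / t) - 1) * (((h + t : ℕ) : ℂ) / (t : ℂ)))) atTop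
        (nhds ((1 ^ h * Complex.exp z - 1) / (z * 1))) :=
      (((hq.pow h).mul_const _).sub_const 1).div (hmul.mul hratio) (by simpa using hz)
    rw [one_pow, one_mul, mul_one] at h1
    refine h1.congr' ?_
    have hne : ∀ᶠ t : ℕ in atTop, (t : ℂ) * (Complex.exp (z / t) - 1) ≠ 0 :=
      hmul.eventually_ne hz
    filter_upwards [hne] with t ht
    have ht0 : (t : ℂ) ≠ 0 := left_ne_zero_of_mul ht
    have hq1 : Complex.exp (z / t) - 1 ≠ 0 := right_ne_zero_of_mul ht
    have hpow : Complex.exp (z / t) ^ t = Complex.exp z := by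
      rw [← Complex.exp_nat_mul]
      congr 1
      field_simp
    have hgeom := mul_geom_sum (Complex.exp (z / t)) (h + t)
    rw [pow_add, hpow] at hgeom
    rw [← hgeom]
    have hht : ((h + t : ℕ) : ℂ) ≠ 0 := by
      have : h + t ≠ 0 := by omega
      exact_mod_cast this
    field_simp
  have hfin := hnum.div hden one_ne_zero
  rw [div_one] at hfin
  exact hfin

/-- For fixed `r, s` and every real `x ≠ 0`, the characteristic function of `X_t/t`
(where `X_t` is the volume of a uniformly random plane partition in an `(r,s,t)`-box)
converges as `t → ∞`: `E[exp(i x X_t/t)] → ((e^{ix} − 1)/(ix))^{rs}`. -/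
theorem char_fun_limit_PP (r s : ℕ) (hr : 0 < r) (hs : 0 < s) (x : ℝ) (hx : x ≠ 0) :
    Tendsto (fun t : ℕ =>
      (∑ p ∈ PP r s t, Complex.exp (Complex.I * x * (vol p : ℂ) / (t : ℂ))) /
        ((PP r s t).card : ℂ))
      atTop
      (nhds (((Complex.exp (Complex.I * x) - 1) / (Complex.I * x)) ^ (r * s))) := by
  have hlim := tendsto_finsetProd (Finset.univ : Finset (Fin r)) fun i _ =>
    tendsto_finsetProd (Finset.univ : Finset (Fin s)) fun j _ =>
      factor_limit x hx ((i : ℕ) + j + 1) (by omega)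
  simp only [Finset.prod_const, Finset.card_univ, Fintype.card_fin, ← pow_mul] at hlim
  rw [mul_comm s r] at hlim
  refine hlim.congr' ?_
  have hq := tendsto_exp_div (Complex.I * x)
  -- For large `t` the denominator of MacMahon's product does not vanish at `e^{ix/t}`.
  have hne : ∀ᶠ t : ℕ in atTop, ∏ i : Fin r, ∏ j : Fin s,
      ∑ k ∈ Finset.range ((i : ℕ) + j + 1), Complex.exp (Complex.I * x / t) ^ k ≠ 0 := by
    have := tendsto_finsetProd (Finset.univ : Finset (Fin r)) fun i _ =>
      tendsto_finsetProd (Finset.univ : Finset (Fin s)) fun j _ =>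
        tendsto_finsetSum (Finset.range ((i : ℕ) + j + 1)) fun k _ => hq.pow k
    refine this.eventually_ne ?_
    refine Finset.prod_ne_zero_iff.2 fun i _ => Finset.prod_ne_zero_iff.2 fun j _ => ?_
    simp
    norm_cast
  filter_upwards [hne] with t ht
  have hsum : ∑ p ∈ PP r s t, Complex.exp (Complex.I * x * (vol p : ℂ) / (t : ℂ)) =
      ∑ p ∈ PP r s t, Complex.exp (Complex.I * x / t) ^ vol p := by
    refine Finset.sum_congr rfl fun p _ => ?_
    rw [← Complex.exp_nat_mul]
    congr 1
    ring
  have hcard := macmahon 1 r s t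
  simp only [one_pow, Finset.sum_const, Finset.card_range, nsmul_eq_mul, mul_one] at hcard
  have hden : ∏ i : Fin r, ∏ j : Fin s, (((i : ℕ) + j + 1 : ℕ) : ℂ) ≠ 0 :=
    Finset.prod_ne_zero_iff.2 fun i _ => Finset.prod_ne_zero_iff.2 fun j _ => by norm_cast
  have hnum : ∏ i : Fin r, ∏ j : Fin s, (((i : ℕ) + j + 1 + t : ℕ) : ℂ) ≠ 0 :=
    Finset.prod_ne_zero_iff.2 fun i _ => Finset.prod_ne_zero_iff.2 fun j _ => by
      have : (i : ℕ) + j + 1 + t ≠ 0 := by omega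
      exact_mod_cast this
  have hcard0 : ((PP r s t).card : ℂ) ≠ 0 := by
    intro h
    rw [h, zero_mul] at hcard
    exact hnum hcard.symm
  rw [hsum]
  simp only [Finset.prod_div_distrib]
  rw [← macmahon, ← hcard]
  field_simp
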